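/- arXiv:2008.10577 — 3 statements merged into one kernel-verified Lean document; each statement's English description precedes it below -/
import Mathlib

section
/- Let X be a multiset of elements of ZMod m and let x ∈ X have multiplicity at least 3 in X. Let Y be the multiset resulting from removing two copies of x from X and adding one copy of 2x (computed in ZMod m). Then Y* = X* and the cardinality of Y equals the cardinality of X minus 1. -/
/-- The set of attainable subset sums of a multiset `X` over `ZMod m`:
all values `Y.sum` for sub-multisets `Y ≤ X`. -/
def subsetSums {m : ℕ} (X : Multiset (ZMod m)) : Set (ZMod m) :=
  {s | ∃ Y ≤ X, Y.sum = s}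

theorem mem_subsetSums_cons {m : ℕ} (a s : ZMod m) (Z : Multiset (ZMod m)) :
    s ∈ subsetSums (a ::ₘ Z) ↔ s ∈ subsetSums Z ∨ s - a ∈ subsetSums Z := by
  constructor
  · rintro ⟨Y, hY, rfl⟩
    by_cases ha : a ∈ Y
    · right
      obtain ⟨W, rfl⟩ := Multiset.exists_cons_of_mem ha
      exact ⟨W, (Multiset.cons_le_cons_iff a).1 hY, by simp⟩
    · left
      exact ⟨Y, (Multiset.le_cons_of_notMem ha).1 hY, rfl⟩
  · rintro (⟨Y, hY, rfl⟩ | ⟨Y, hY, h⟩)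
    · exact ⟨Y, hY.trans (Multiset.le_cons_self Z a), rfl⟩
    · exact ⟨a ::ₘ Y, (Multiset.cons_le_cons_iff a).2 hY, by simp [h]⟩

/-- If `x` has multiplicity at least 3 in `X`, then removing two copies of `x`
and adding one copy of `2x` preserves the set of attainable subset sums and
decreases the cardinality by exactly one. -/
theorem preprocessing_onestep (m : ℕ) (hm : 1 ≤ m) (X : Multiset (ZMod m))
    (x : ZMod m) (hx : 3 ≤ X.count x) :
    subsetSums ((2 * x) ::ₘ ((X.erase x).erase x)) = subsetSums X ∧
    ((2 * x) ::ₘ ((X.erase x).erase x)).card = X.card - 1 := by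
  obtain ⟨Z, rfl⟩ : ∃ Z, X = x ::ₘ x ::ₘ x ::ₘ Z := by
    obtain ⟨Z, hZ⟩ := Multiset.le_iff_exists_add.1 (Multiset.le_count_iff_replicate_le.1 hx)
    exact ⟨Z, by rw [hZ]; simp [Multiset.replicate_succ]⟩
  simp only [Multiset.erase_cons_head]
  constructor
  · ext s
    have h1 : s - 2 * x = s - x - x := by ring
    simp only [mem_subsetSums_cons, h1]
    tauto
  · simp
end

section
/- Let m ≥ 1, let S ⊆ {0, …, m−1}, let x ∈ {0, …, m−1}, and define the doubled indicator χ : {0, …, 2m−1} → {0, 1} by χ(i) = 1 iff (i mod m) ∈ S. Identify S with a subset of ZMod m. Then for every d ∈ {0, …, m−1}: χ(d) ≠ χ(d + m − x) if and only if d (viewed in ZMod m) belongs to the symmetric difference (S + x) △ S. Consequently, if (S + x) △ S is nonempty, the least d ∈ {0, …, m−1} with χ(d) ≠ χ(d + m − x) is exactly the least representative in {0, …, m−1} of an element of (S + x) △ S. (Correctness of extracting the symmetric difference via longest-common-prefix queries in Algorithm II.) -/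
/-- Correctness of extracting the symmetric difference via longest-common-prefix
queries in Algorithm II: with `χ` the doubled indicator string of
`S ⊆ {0, …, m-1}` (i.e. `χ i = 1` iff `i % m ∈ S`) and `x < m`, a position
`d < m` satisfies `χ d ≠ χ (d + m - x)` iff `d` (viewed in `ZMod m`) lies in the
symmetric difference `(S + x) △ S`; consequently, if this symmetric difference
is nonempty, the least such `d` is the least representative in `{0, …, m-1}` of
an element of `(S + x) △ S`. -/
theorem lcp_extracts_symmDiff (m : ℕ) (hm : 1 ≤ m) (S : Finset ℕ)
    (hS : ∀ i ∈ S, i < m) (x : ℕ) (hx : x < m) :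
    (∀ d, d < m →
      (¬(d % m ∈ S ↔ (d + m - x) % m ∈ S) ↔
        (d : ZMod m) ∈
          symmDiff ((· + (x : ZMod m)) '' (((↑) : ℕ → ZMod m) '' (S : Set ℕ)))
            ((((↑) : ℕ → ZMod m)) '' (S : Set ℕ)))) ∧
    ((symmDiff ((· + (x : ZMod m)) '' (((↑) : ℕ → ZMod m) '' (S : Set ℕ)))
        ((((↑) : ℕ → ZMod m)) '' (S : Set ℕ))).Nonempty →
      sInf {d : ℕ | d < m ∧ ¬(d % m ∈ S ↔ (d + m - x) % m ∈ S)} =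
      sInf {d : ℕ | d < m ∧
        (d : ZMod m) ∈
          symmDiff ((· + (x : ZMod m)) '' (((↑) : ℕ → ZMod m) '' (S : Set ℕ)))
            ((((↑) : ℕ → ZMod m)) '' (S : Set ℕ))}) := by
  have key : ∀ n : ℕ, (n : ZMod m) ∈ (((↑) : ℕ → ZMod m) '' (S : Set ℕ)) ↔ n % m ∈ S := by
    intro n
    constructor
    · rintro ⟨i, hi, h⟩
      have h2 := (ZMod.natCast_eq_natCast_iff' i n m).1 h
      rw [Nat.mod_eq_of_lt (hS i hi)] at h2
      rw [← h2]
      exact hi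
    · intro h
      exact ⟨n % m, h, ZMod.natCast_mod n m⟩
  have key2 : ∀ d : ℕ,
      (d : ZMod m) ∈ ((· + (x : ZMod m)) '' (((↑) : ℕ → ZMod m) '' (S : Set ℕ))) ↔
        (d + m - x) % m ∈ S := by
    intro d
    rw [← key]
    have e : ((d + m - x : ℕ) : ZMod m) = (d : ZMod m) - x := by
      rw [Nat.cast_sub (by omega)]
      simp
    rw [e]
    constructor
    · rintro ⟨y, hy, h⟩
      have h3 : (d : ZMod m) - x = y := by
        rw [← h]
        simp
      rw [h3]
      exact hy
    · intro h
      exact ⟨_, h, by simp⟩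
  have main : ∀ d, d < m →
      (¬(d % m ∈ S ↔ (d + m - x) % m ∈ S) ↔
        (d : ZMod m) ∈
          symmDiff ((· + (x : ZMod m)) '' (((↑) : ℕ → ZMod m) '' (S : Set ℕ)))
            ((((↑) : ℕ → ZMod m)) '' (S : Set ℕ))) := by
    intro d _
    rw [Set.mem_symmDiff, key, key2]
    tauto
  refine ⟨main, fun _ => ?_⟩
  congr 1
  ext d
  exact and_congr_right (main d)
end

section
/- Let G be a finite undirected simple graph with edge-weight function w assigning pairwise distinct real weights to its edges, and let e_1, e_2, …, e_M be all edges of G listed in increasing order of weight. Call a walk in G strictly increasing if the sequence of weights of its consecutive edges is strictly increasing (walks of length 0 are strictly increasing). For k ≥ 0 write reach_k(u, v) if there is a strictly increasing walk from u to v using only edges from {e_1, …, e_k}. If 1 ≤ k ≤ M and e_k has endpoints a and b, then for all vertices u, v: reach_k(u, v) holds if and only if reach_{k−1}(u, v) holds, or (v = b and reach_{k−1}(u, a)), or (v = a and reach_{k−1}(u, b)). (Correctness of the edge-scanning recurrence of the All-Pairs Non-Decreasing Paths algorithm in the distinct-weights case.) -/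
/-- A walk in a weighted graph is strictly increasing if the weights of its
edges, in the order traversed, form a strictly increasing sequence. -/
def StrictlyIncreasingWalk {V : Type*} (G : SimpleGraph V) (w : Sym2 V → ℝ)
    {u v : V} (W : G.Walk u v) : Prop :=
  List.Chain' (· < ·) (W.edges.map w)

/-- `reachUpTo G w e k u v`: there is a strictly increasing walk from `u` to `v`
using only edges among the `k` lightest edges `e 0, …, e (k-1)` of `G`. -/
def reachUpTo {V : Type*} {M : ℕ} (G : SimpleGraph V) (w : Sym2 V → ℝ)
    (e : Fin M → Sym2 V) (k : ℕ) (u v : V) : Prop :=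
  ∃ W : G.Walk u v, StrictlyIncreasingWalk G w W ∧
    ∀ f ∈ W.edges, ∃ j : Fin M, (j : ℕ) < k ∧ e j = f

theorem reach_concat_aux {V : Type*} {M : ℕ} (G : SimpleGraph V)
    (w : Sym2 V → ℝ) (e : Fin M → Sym2 V)
    (hmono : StrictMono (fun j => w (e j)))
    (i : Fin M) (u x v : V) (h : G.Adj x v) (hi : e i = s(x, v))
    (hr : reachUpTo G w e i u x) : reachUpTo G w e (i + 1) u v := by
  obtain ⟨W, hW, hf⟩ := hr
  refine ⟨W.concat h, ?_, ?_⟩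
  · unfold StrictlyIncreasingWalk at hW ⊢
    have hW2 := List.isChain_iff_pairwise.1 hW
    apply List.isChain_iff_pairwise.2
    rw [SimpleGraph.Walk.edges_concat, List.concat_eq_append, List.map_append,
      List.pairwise_append]
    refine ⟨hW2, by simp, ?_⟩
    intro p hp q hq
    obtain ⟨f, hfm, rfl⟩ := List.mem_map.1 hp
    obtain ⟨j, hj, rfl⟩ := hf f hfm
    simp only [List.map_cons, List.map_nil, List.mem_singleton] at hq
    rw [hq, ← hi]
    exact hmono (Fin.lt_def.2 hj)
  · intro f hfm
    rw [SimpleGraph.Walk.edges_concat, List.concat_eq_append, List.mem_append,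
      List.mem_singleton] at hfm
    rcases hfm with hfm | rfl
    · obtain ⟨j, hj, hj2⟩ := hf f hfm
      exact ⟨j, by omega, hj2⟩
    · exact ⟨i, by omega, hi⟩

theorem reach_split_aux {V : Type*} {M : ℕ} (G : SimpleGraph V)
    (w : Sym2 V → ℝ) (e : Fin M → Sym2 V)
    (hmono : StrictMono (fun j => w (e j)))
    (k : ℕ) (u v : V) (hr : reachUpTo G w e k u v) :
    u = v ∨ ∃ (x : V) (i : Fin M), (i : ℕ) < k ∧ G.Adj x v ∧ e i = s(x, v) ∧
      reachUpTo G w e i u x := by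
  obtain ⟨W, hW, hf⟩ := hr
  induction W using SimpleGraph.Walk.concatRec with
  | Hnil => exact Or.inl rfl
  | Hconcat p h _ =>
    right
    unfold StrictlyIncreasingWalk at hW
    have hW2 := List.isChain_iff_pairwise.1 hW
    rw [SimpleGraph.Walk.edges_concat, List.concat_eq_append, List.map_append,
      List.pairwise_append] at hW2
    rw [SimpleGraph.Walk.edges_concat, List.concat_eq_append] at hf
    obtain ⟨i, hi, hi2⟩ := hf _ (List.mem_append_right _ (List.mem_singleton.2 rfl))
    refine ⟨_, i, hi, h, hi2, p, List.isChain_iff_pairwise.2 hW2.1, ?_⟩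
    intro f hfm
    obtain ⟨j, hj, rfl⟩ := hf f (List.mem_append_left _ hfm)
    refine ⟨j, ?_, rfl⟩
    have := hW2.2.2 _ (List.mem_map_of_mem hfm) (w (e i)) (by simp [hi2])
    exact Fin.lt_def.1 (hmono.lt_iff_lt.1 this)

theorem reach_mono_aux {V : Type*} {M : ℕ} (G : SimpleGraph V)
    (w : Sym2 V → ℝ) (e : Fin M → Sym2 V) {k l : ℕ} (h : k ≤ l) (u v : V)
    (hr : reachUpTo G w e k u v) : reachUpTo G w e l u v := by
  obtain ⟨W, hW, hf⟩ := hr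
  refine ⟨W, hW, fun f hfm => ?_⟩
  obtain ⟨j, hj, hj2⟩ := hf f hfm
  exact ⟨j, by omega, hj2⟩

/-- Correctness of the edge-scanning recurrence of the All-Pairs Non-Decreasing
Paths algorithm in the distinct-weights case: if `e 0, …, e (M-1)` lists all
edges of `G` in increasing order of their pairwise distinct weights, and the
`k`-th edge (`1 ≤ k ≤ M`) has endpoints `a` and `b`, then `u` reaches `v` using
the first `k` edges iff it does so using the first `k - 1` edges, or `v = b`
and `u` reaches `a`, or `v = a` and `u` reaches `b`, using the first `k - 1`
edges. -/
theorem apnp_edge_scan_recurrence {V : Type*} [Fintype V] (G : SimpleGraph V)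
    (w : Sym2 V → ℝ) (hw : Set.InjOn w G.edgeSet)
    {M : ℕ} (e : Fin M → Sym2 V)
    (he : ∀ j, e j ∈ G.edgeSet)
    (hsurj : ∀ f ∈ G.edgeSet, ∃ j, e j = f)
    (hmono : StrictMono (fun j => w (e j)))
    (k : ℕ) (hk1 : 1 ≤ k) (hkM : k ≤ M)
    (a b : V) (hab : e ⟨k - 1, by omega⟩ = s(a, b)) :
    ∀ u v : V,
      reachUpTo G w e k u v ↔
        reachUpTo G w e (k - 1) u v ∨
          (v = b ∧ reachUpTo G w e (k - 1) u a) ∨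
          (v = a ∧ reachUpTo G w e (k - 1) u b) := by
  intro u v
  have hadj : G.Adj a b := by
    have := he ⟨k - 1, by omega⟩
    rwa [hab, SimpleGraph.mem_edgeSet] at this
  have hk : k - 1 + 1 = k := by omega
  constructor
  · intro hr
    rcases reach_split_aux G w e hmono k u v hr with rfl | ⟨x, i, hi, hx, hxi, hrx⟩
    · exact Or.inl ⟨SimpleGraph.Walk.nil, List.IsChain.nil, by simp⟩
    · by_cases hik : (i : ℕ) < k - 1
      · left
        exact reach_mono_aux G w e (by omega) u v
          (reach_concat_aux G w e hmono i u x v hx hxi hrx)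
      · right
        have hieq : i = ⟨k - 1, by omega⟩ := Fin.ext (by simp; omega)
        rw [hieq] at hxi hrx
        rw [hab] at hxi
        rcases Sym2.eq_iff.1 hxi with ⟨rfl, rfl⟩ | ⟨rfl, rfl⟩
        · exact Or.inl ⟨rfl, hrx⟩
        · exact Or.inr ⟨rfl, hrx⟩
  · rintro (hr | ⟨rfl, hr⟩ | ⟨rfl, hr⟩)
    · exact reach_mono_aux G w e (by omega) u v hr
    · have := reach_concat_aux G w e hmono ⟨k - 1, by omega⟩ u a v hadj hab hr
      simpa only [hk] using this
    · have := reach_concat_aux G w e hmono ⟨k - 1, by omega⟩ u b v hadj.symm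
        (hab.trans Sym2.eq_swap) hr
      simpa only [hk] using this
end
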